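/- For every α ∈ (0,1), one has lim_{z → −∞} z^6 · (2·E_α'(z)² − E_α(z)·E_α''(z)) = 2·(1/Γ(1−2α)² − 1/(Γ(1−α)·Γ(1−3α))), where reciprocals of Gamma at its poles are interpreted as 0. -/

import Mathlib

/-- The two-parameter Mittag-Leffler function `E_{α,β}(z) = ∑ z^n / Γ(β + αn)`;
the classical Mittag-Leffler function is `E_α = E_{α,1}`. -/
noncomputable def mittagLeffler (α β z : ℝ) : ℝ :=
  ∑' n : ℕ, z ^ n / Real.Gamma (β + α * n)

section helpers
open MeasureTheory Filter Topology Set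

lemma ml_intOn (s b : ℝ) (hs : -1 < s) (hb : 0 < b) :
    IntegrableOn (fun t : ℝ => t ^ s * Real.exp (-(b * t))) (Ioi 0) := by
  have := integrableOn_rpow_mul_exp_neg_mul_rpow (p := 1) (s := s) (b := b) hs one_pos hb
  simpa using this

lemma ml_normF (s t : ℝ) (r : ℂ) (ht : 0 < t) :
    ‖((t ^ s : ℝ) : ℂ) * Complex.exp (-(r * t))‖ = t ^ s * Real.exp (-(r.re * t)) := by
  rw [norm_mul, Complex.norm_exp, Complex.norm_real, Real.norm_of_nonneg (by positivity)]
  simp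

lemma ml_meas (s : ℝ) (r : ℂ) : AEStronglyMeasurable
    (fun t : ℝ => ((t ^ s : ℝ) : ℂ) * Complex.exp (-(r * t))) (volume.restrict (Ioi 0)) := by
  apply Measurable.aestronglyMeasurable
  fun_prop

lemma ml_intC (s : ℝ) (r : ℂ) (hs : -1 < s) (hr : 0 < r.re) :
    IntegrableOn (fun t : ℝ => ((t ^ s : ℝ) : ℂ) * Complex.exp (-(r * t))) (Ioi 0) := by
  refine Integrable.mono' (ml_intOn s r.re hs hr) (ml_meas s r) ?_
  filter_upwards [ae_restrict_mem measurableSet_Ioi] with t ht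
  exact (ml_normF s t r ht).le

lemma ml_diff (s : ℝ) (hs : 0 < s) (r₀ : ℂ) (hr : 0 < r₀.re) :
    DifferentiableAt ℂ (fun r : ℂ => ∫ t in Ioi (0:ℝ), ((t ^ (s-1) : ℝ) : ℂ) * Complex.exp (-(r * t))) r₀ := by
  have h := hasDerivAt_integral_of_dominated_loc_of_deriv_le (μ := volume.restrict (Ioi (0:ℝ)))
    (F := fun (r : ℂ) (t : ℝ) => ((t ^ (s-1) : ℝ) : ℂ) * Complex.exp (-(r * t)))
    (F' := fun (r : ℂ) (t : ℝ) => -(((t ^ s : ℝ) : ℂ) * Complex.exp (-(r * t))))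
    (x₀ := r₀) (s := {r : ℂ | r₀.re / 2 < r.re})
    (bound := fun t => t ^ s * Real.exp (-((r₀.re / 2) * t)))
    ((isOpen_lt continuous_const Complex.continuous_re).mem_nhds (by simp; linarith))
    (Eventually.of_forall fun r => ml_meas _ _)
    (ml_intC _ _ (by linarith) hr)
    (ml_meas _ _).neg ?_ (ml_intOn _ _ (by linarith) (by linarith)) ?_
  · exact h.2.differentiableAt
  · filter_upwards [ae_restrict_mem measurableSet_Ioi] with t ht r hr
    have ht : 0 < t := ht
    rw [norm_neg, ml_normF s t r ht]
    have : r₀.re / 2 < r.re := hr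
    gcongr
  · filter_upwards [ae_restrict_mem measurableSet_Ioi] with t ht r hr
    have ht : 0 < t := ht
    have h1 : HasDerivAt (fun r : ℂ => -(r * t)) (-(1 * (t:ℂ))) r :=
      ((hasDerivAt_id r).mul_const (t:ℂ)).neg
    have h2 := (h1.cexp).const_mul ((t ^ (s-1) : ℝ) : ℂ)
    have : t ^ s = t ^ (s-1) * t := by
      rw [← Real.rpow_add_one ht.ne']; simp
    have h3 : -(((t ^ s : ℝ) : ℂ) * Complex.exp (-(r * t))) =
        ((t ^ (s-1) : ℝ) : ℂ) * (Complex.exp (-(r * t)) * -(1 * (t:ℂ))) := by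
      rw [this]; push_cast; ring
    rw [h3]
    exact h2

lemma ml_gammaInt (s : ℝ) (hs : 0 < s) (r : ℂ) (hr : 0 < r.re) :
    ∫ t in Ioi (0:ℝ), ((t ^ (s-1) : ℝ) : ℂ) * Complex.exp (-(r * t)) =
      (Real.Gamma s : ℂ) * r ^ (-(s:ℂ)) := by
  set U : Set ℂ := {r : ℂ | 0 < r.re} with hU
  have hUo : IsOpen U := isOpen_lt continuous_const Complex.continuous_re
  have hUc : IsPreconnected U := (convex_halfSpace_re_gt 0).isPreconnected
  have h1 : AnalyticOnNhd ℂ (fun r : ℂ => ∫ t in Ioi (0:ℝ), ((t ^ (s-1) : ℝ) : ℂ) * Complex.exp (-(r * t))) U :=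
    DifferentiableOn.analyticOnNhd (fun r hr => (ml_diff s hs r hr).differentiableWithinAt) hUo
  have h2 : AnalyticOnNhd ℂ (fun r : ℂ => (Real.Gamma s : ℂ) * r ^ (-(s:ℂ))) U := by
    refine DifferentiableOn.analyticOnNhd (fun r hr => ?_) hUo
    refine DifferentiableAt.differentiableWithinAt ?_
    exact (differentiableAt_id.cpow_const (Or.inl hr)).const_mul _
  refine h1.eqOn_of_preconnected_of_frequently_eq h2 hUc (z₀ := 1) (by simp [hU]) ?_ hr
  have hreal : ∀ x : ℝ, 0 < x → ∫ t in Ioi (0:ℝ), ((t ^ (s-1) : ℝ) : ℂ) * Complex.exp (-((x:ℂ) * t)) =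
      (Real.Gamma s : ℂ) * (x:ℂ) ^ (-(s:ℂ)) := by
    intro x hx
    have := Real.integral_rpow_mul_exp_neg_mul_Ioi hs hx
    have h3 : ∀ t : ℝ, ((t ^ (s-1) : ℝ) : ℂ) * Complex.exp (-((x:ℂ) * t)) = ((t ^ (s-1) * Real.exp (-(x * t)) : ℝ) : ℂ) := by
      intro t; push_cast; rfl
    simp_rw [h3]
    rw [integral_complex_ofReal, this, mul_comm, Complex.ofReal_mul, one_div, Real.inv_rpow hx.le, ← Real.rpow_neg hx.le,
      Complex.ofReal_cpow hx.le]
    simp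
  have ht : Tendsto (fun n : ℕ => (((1 + 1 / ((n:ℝ) + 1) : ℝ)) : ℂ)) atTop (𝓝[≠] 1) := by
    refine tendsto_nhdsWithin_iff.2 ⟨?_, Eventually.of_forall fun n => ?_⟩
    · have : Tendsto (fun n : ℕ => (1 + 1 / ((n:ℝ) + 1) : ℝ)) atTop (𝓝 (1 + 0)) :=
        tendsto_const_nhds.add tendsto_one_div_add_atTop_nhds_zero_nat
      have := (Complex.continuous_ofReal.tendsto _).comp this
      rw [add_zero, Complex.ofReal_one] at this
      exact this
    · have : (0:ℝ) < 1 / ((n:ℝ) + 1) := by positivity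
      simp only [mem_compl_iff, mem_singleton_iff]
      rw [Complex.ofReal_eq_one]
      linarith
  refine ht.frequently (Eventually.frequently (Eventually.of_forall fun n => ?_))
  exact hreal _ (by positivity)

/-- The point `1 + 2πiξ` of the vertical line of integration. -/
noncomputable def mlW (ξ : ℝ) : ℂ := 1 + ((2 * Real.pi * ξ : ℝ) : ℂ) * Complex.I

lemma mlW_re (ξ : ℝ) : (mlW ξ).re = 1 := by simp [mlW]

lemma mlW_slit (ξ : ℝ) : mlW ξ ∈ Complex.slitPlane := Or.inl (by rw [mlW_re]; exact one_pos)

lemma mlW_ne (ξ : ℝ) : mlW ξ ≠ 0 := Complex.slitPlane_ne_zero (mlW_slit ξ)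

lemma mlW_cont : Continuous mlW := by unfold mlW; fun_prop

lemma mlW_one_le (ξ : ℝ) : 1 ≤ ‖mlW ξ‖ := by
  have := Complex.re_le_norm (mlW ξ)
  rwa [mlW_re] at this

lemma mlW_sq (ξ : ℝ) : 1 + ξ ^ 2 ≤ ‖mlW ξ‖ ^ 2 := by
  rw [← Complex.normSq_eq_norm_sq, Complex.normSq_apply]
  simp only [mlW, Complex.add_re, Complex.one_re, Complex.mul_re, Complex.ofReal_re, Complex.I_re,
    Complex.ofReal_im, Complex.I_im, Complex.add_im, Complex.one_im, Complex.mul_im]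
  have := Real.pi_gt_three
  nlinarith [sq_nonneg ξ, mul_nonneg (sq_nonneg ξ) (sq_nonneg (Real.pi - 1)),
    mul_nonneg (sq_nonneg ξ) (by linarith : (0:ℝ) ≤ Real.pi - 3)]

lemma mlW_cpow_cont (c : ℂ) : Continuous (fun ξ => mlW ξ ^ c) :=
  mlW_cont.cpow continuous_const (fun ξ => mlW_slit ξ)

lemma mlW_cpow_bound (s : ℝ) (hs : 2 ≤ s) (ξ : ℝ) : ‖mlW ξ ^ (-(s:ℂ))‖ ≤ (1 + ξ ^ 2)⁻¹ := by
  have h : (-(s:ℂ)) = ((-s : ℝ) : ℂ) := by push_cast; rfl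
  rw [h, Complex.norm_cpow_real]
  have h1 := mlW_one_le ξ
  calc ‖mlW ξ‖ ^ (-s) ≤ ‖mlW ξ‖ ^ (-2 : ℝ) := Real.rpow_le_rpow_of_exponent_le h1 (by linarith)
    _ = (‖mlW ξ‖ ^ 2)⁻¹ := by
      rw [Real.rpow_neg (by linarith)]; norm_num
    _ ≤ _ := by
      have := mlW_sq ξ
      gcongr

lemma mlW_cpow_int (s : ℝ) (hs : 2 ≤ s) : Integrable (fun ξ => mlW ξ ^ (-(s:ℂ))) :=
  Integrable.mono' integrable_inv_one_add_sq (mlW_cpow_cont _).aestronglyMeasurable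
    (Eventually.of_forall (mlW_cpow_bound s hs))

lemma ml_invGamma (s : ℝ) (hs : 2 ≤ s) :
    ∫ ξ : ℝ, Complex.exp (mlW ξ) * mlW ξ ^ (-(s:ℂ)) = ((1 / Real.Gamma s : ℝ) : ℂ) := by
  set f : ℝ → ℂ := (Ioi (0:ℝ)).indicator
    (fun t : ℝ => ((t ^ (s-1) : ℝ) : ℂ) * Complex.exp (-((1:ℂ) * t))) with hf
  have hG : (Real.Gamma s : ℂ) ≠ 0 := by
    exact_mod_cast (Real.Gamma_pos_of_pos (by linarith)).ne'
  have hfi : Integrable f := (integrable_indicator_iff measurableSet_Ioi).2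
    (ml_intC (s-1) 1 (by linarith) (by simp))
  have hF : FourierTransform.fourier f = fun ξ => (Real.Gamma s : ℂ) * mlW ξ ^ (-(s:ℂ)) := by
    funext ξ
    rw [Real.fourier_real_eq_integral_exp_smul, ← ml_gammaInt s (by linarith) (mlW ξ) (by simp [mlW_re]),
      ← integral_indicator measurableSet_Ioi]
    congr 1
    funext t
    by_cases ht : t ∈ Ioi (0:ℝ)
    · simp only [hf, indicator_of_mem ht, smul_eq_mul]
      rw [mul_left_comm, ← Complex.exp_add]
      congr 2
      simp only [mlW]
      push_cast
      ring
    · simp only [hf, indicator_of_notMem ht, smul_zero]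
  have hFi : Integrable (FourierTransform.fourier f) := by
    rw [hF]; exact (mlW_cpow_int s hs).const_mul _
  have hfc : ContinuousAt f 1 := by
    have : f =ᶠ[𝓝 1] (fun t : ℝ => ((t ^ (s-1) : ℝ) : ℂ) * Complex.exp (-((1:ℂ) * t))) := by
      filter_upwards [Ioi_mem_nhds (show (0:ℝ) < 1 from one_pos)] with t ht
      simp only [hf, indicator_of_mem ht]
    refine ContinuousAt.congr ?_ this.symm
    have h1 : ContinuousAt (fun t : ℝ => t ^ (s-1)) 1 :=
      Real.continuousAt_rpow_const _ _ (Or.inl one_ne_zero)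
    have h2 : ContinuousAt (fun t : ℝ => ((t ^ (s-1) : ℝ) : ℂ)) 1 :=
      Complex.continuous_ofReal.continuousAt.comp h1
    exact h2.mul (by fun_prop)
  have key := hfi.fourierInv_fourier_eq hFi hfc
  rw [hF, Real.fourierInv_eq'] at key
  have hf1 : f 1 = Complex.exp (-1) := by
    simp [hf]
  rw [hf1] at key
  have : ∫ ξ : ℝ, Complex.exp (mlW ξ) * mlW ξ ^ (-(s:ℂ)) =
      (Complex.exp 1 / Real.Gamma s) * ∫ v : ℝ, Complex.exp (((2 * Real.pi * inner ℝ v (1:ℝ) : ℝ) : ℂ) * Complex.I) •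
        ((Real.Gamma s : ℂ) * mlW v ^ (-(s:ℂ))) := by
    rw [← integral_const_mul]
    congr 1
    funext ξ
    have h4 : Complex.exp (mlW ξ) = Complex.exp 1 *
        Complex.exp (((2 * Real.pi * inner ℝ ξ (1:ℝ) : ℝ) : ℂ) * Complex.I) := by
      rw [← Complex.exp_add]; simp [mlW]
    rw [h4, smul_eq_mul]
    field_simp
  rw [this, key, div_mul_eq_mul_div, ← Complex.exp_add]
  simp

lemma ml_Gamma_lower (M s : ℝ) (hM : 1 ≤ M) (hs : 1 ≤ s) :
    Real.exp (-(M+1)) * M ^ (s-1) ≤ Real.Gamma s := by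
  rw [Real.Gamma_eq_integral (by linarith)]
  have hint := Real.GammaIntegral_convergent (s := s) (by linarith)
  have hsub : Icc M (M+1) ⊆ Ioi (0:ℝ) := fun t ht => by
    have := ht.1; simp only [mem_Ioi]; linarith
  calc Real.exp (-(M+1)) * M ^ (s-1)
      = ∫ t in Icc M (M+1), Real.exp (-(M+1)) * M ^ (s-1) := by simp
    _ ≤ ∫ t in Icc M (M+1), Real.exp (-t) * t ^ (s-1) := by
        refine setIntegral_mono_on (integrableOn_const (by simp)) (hint.mono_set hsub) measurableSet_Icc ?_
        intro t ht
        have h1 := ht.1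
        have h2 := ht.2
        have h3 : M ^ (s-1) ≤ t ^ (s-1) := Real.rpow_le_rpow (by linarith) h1 (by linarith)
        have h4 : Real.exp (-(M+1)) ≤ Real.exp (-t) := Real.exp_le_exp.2 (by linarith)
        exact mul_le_mul h4 h3 (Real.rpow_nonneg (by linarith) _) (Real.exp_pos _).le
    _ ≤ _ := by
        refine setIntegral_mono_set hint ?_ hsub.eventuallyLE
        filter_upwards [ae_restrict_mem measurableSet_Ioi] with t ht
        have ht : 0 < t := ht
        simp only [Pi.zero_apply]
        positivity

lemma ml_summable (α β x : ℝ) (hα : 0 < α) (hx : 0 ≤ x) :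
    Summable (fun n : ℕ => x ^ n * |1 / Real.Gamma (β + α * n)|) := by
  set M : ℝ := (2 * x + 1) ^ (1 / α) with hMdef
  have hM : 1 ≤ M := Real.one_le_rpow (by linarith) (by positivity)
  have hM0 : 0 < M := by linarith
  have hMα : M ^ α = 2 * x + 1 := by
    rw [hMdef, ← Real.rpow_mul (by linarith)]
    rw [one_div_mul_cancel hα.ne', Real.rpow_one]
  have hq : Summable (fun n : ℕ => (Real.exp (M+1) * M ^ (1-β)) * (x / (2 * x + 1)) ^ n) := by
    refine (summable_geometric_of_lt_one (by positivity) ?_).mul_left _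
    rw [div_lt_one (by linarith)]; linarith
  refine summable_of_isBigO_nat hq (Asymptotics.IsBigO.of_bound 1 ?_)
  obtain ⟨N, hN⟩ := exists_nat_gt ((1 - β) / α)
  filter_upwards [eventually_ge_atTop N] with n hn
  have hs : 1 ≤ β + α * n := by
    have h1 : (1 - β) / α < n := lt_of_lt_of_le hN (by exact_mod_cast hn)
    rw [div_lt_iff₀ hα] at h1
    linarith
  have hl := ml_Gamma_lower M _ hM hs
  have hlpos : 0 < Real.exp (-(M+1)) * M ^ (β + α * n - 1) := by positivity
  have hG : 0 < Real.Gamma (β + α * n) := lt_of_lt_of_le hlpos hl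
  rw [abs_of_pos (by positivity), one_mul, Real.norm_of_nonneg (by positivity),
    Real.norm_of_nonneg (by positivity)]
  have h2 : 1 / Real.Gamma (β + α * n) ≤ 1 / (Real.exp (-(M+1)) * M ^ (β + α * n - 1)) := by
    gcongr
  have h3 : M ^ (β + α * n - 1) * M ^ (1 - β) = (2 * x + 1) ^ n := by
    rw [← Real.rpow_add hM0, ← hMα, ← Real.rpow_natCast, ← Real.rpow_mul hM0.le]
    congr 1; ring
  have h4 : 1 / (Real.exp (-(M+1)) * M ^ (β + α * n - 1)) =
      (Real.exp (M+1) * M ^ (1-β)) / (2 * x + 1) ^ n := by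
    rw [← h3, Real.exp_neg]
    have : 0 < M ^ (1 - β) := by positivity
    have : 0 < M ^ (β + α * n - 1) := by positivity
    field_simp
  calc x ^ n * (1 / Real.Gamma (β + α * n)) ≤ x ^ n * (1 / (Real.exp (-(M+1)) * M ^ (β + α * n - 1))) := by
        gcongr
    _ = _ := by rw [h4, div_pow]; ring

/-- Complex Mittag-Leffler function. -/
noncomputable def mlC (α β : ℝ) (z : ℂ) : ℂ :=
  ∑' n : ℕ, z ^ n * ((1 / Real.Gamma (β + α * n) : ℝ) : ℂ)

lemma mlC_summable (α β : ℝ) (hα : 0 < α) (z : ℂ) :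
    Summable (fun n : ℕ => z ^ n * ((1 / Real.Gamma (β + α * n) : ℝ) : ℂ)) := by
  refine Summable.of_norm ?_
  refine (ml_summable α β ‖z‖ hα (norm_nonneg _)).congr fun n => ?_
  rw [norm_mul, norm_pow, Complex.norm_real, Real.norm_eq_abs]

lemma mlC_aux (α β : ℝ) (R : ℝ) (n : ℕ) (w : ℂ) (hw : w ∈ Metric.ball (0:ℂ) R) :
    ‖w ^ n * ((1 / Real.Gamma (β + α * n) : ℝ) : ℂ)‖ ≤ R ^ n * |1 / Real.Gamma (β + α * n)| := by
  rw [norm_mul, norm_pow, Complex.norm_real, Real.norm_eq_abs]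
  have : ‖w‖ ≤ R := by simpa using (mem_ball_zero_iff.1 hw).le
  gcongr

lemma mlC_diff (α β : ℝ) (hα : 0 < α) : Differentiable ℂ (mlC α β) := by
  intro z
  have hz : z ∈ Metric.ball (0:ℂ) (‖z‖ + 1) := by simp
  have := Complex.differentiableOn_tsum_of_summable_norm
    (F := fun (n : ℕ) (z : ℂ) => z ^ n * ((1 / Real.Gamma (β + α * n) : ℝ) : ℂ))
    (ml_summable α β (‖z‖ + 1) hα (by positivity))
    (fun n => by fun_prop) Metric.isOpen_ball (fun n w hw => mlC_aux α β _ n w hw)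
  exact (this z hz).differentiableAt (Metric.isOpen_ball.mem_nhds hz)

lemma ml_Gamma_rec (s : ℝ) : (s - 1) * (1 / Real.Gamma s) = 1 / Real.Gamma (s - 1) := by
  by_cases h : s - 1 = 0
  · rw [h]; simp
  · have := Real.Gamma_add_one h
    rw [sub_add_cancel] at this
    rw [this, one_div, mul_inv, ← mul_assoc, mul_inv_cancel₀ h, one_mul, one_div]

lemma mlC_deriv (α β : ℝ) (hα : 0 < α) (z : ℂ) :
    α * (z * deriv (mlC α β) z) = mlC α (β - 1) z - (β - 1) * mlC α β z := by
  have hz : z ∈ Metric.ball (0:ℂ) (‖z‖ + 1) := by simp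
  have h1 := Complex.hasSum_deriv_of_summable_norm
    (F := fun (n : ℕ) (z : ℂ) => z ^ n * ((1 / Real.Gamma (β + α * n) : ℝ) : ℂ))
    (ml_summable α β (‖z‖ + 1) hα (by positivity))
    (fun n => by fun_prop) Metric.isOpen_ball (fun n w hw => mlC_aux α β _ n w hw) hz
  have h2 := (h1.mul_left z).mul_left (α : ℂ)
  have h3 := ((mlC_summable α (β-1) hα z).hasSum).sub (((mlC_summable α β hα z).hasSum).mul_left ((β:ℂ) - 1))
  refine h2.unique (h3.congr_fun ?_)
  intro n
  have h4 := ml_Gamma_rec (β + α * n)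
  have h5 : β + α * n - 1 = β - 1 + α * n := by ring
  rw [h5] at h4
  rw [← h4]
  have h6 : deriv (fun z : ℂ => z ^ n * ((1 / Real.Gamma (β + α * n) : ℝ) : ℂ)) z =
      (n : ℂ) * z ^ (n-1) * ((1 / Real.Gamma (β + α * n) : ℝ) : ℂ) := by
    rw [deriv_mul_const (by fun_prop)]; simp
  rw [h6]
  have h7 : z * ((n : ℂ) * z ^ (n-1)) = n * z ^ n := by
    rcases n with _ | n
    · simp
    · simp [pow_succ]; ring
  rw [← mul_assoc z, h7]
  push_cast
  ring

lemma mlC_shift (α β : ℝ) (hα : 0 < α) (z : ℂ) :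
    mlC α β z = ((1 / Real.Gamma β : ℝ) : ℂ) + z * mlC α (β + α) z := by
  unfold mlC
  rw [(mlC_summable α β hα z).tsum_eq_zero_add, ← tsum_mul_left]
  congr 1
  · simp
  · congr 1
    funext n
    have : β + α * ((n + 1 : ℕ) : ℝ) = β + α + α * n := by push_cast; ring
    rw [this]; ring

lemma mlC_real (α β x : ℝ) : ((mittagLeffler α β x : ℝ) : ℂ) = mlC α β x := by
  unfold mittagLeffler mlC
  rw [Complex.ofReal_tsum]
  congr 1
  funext n
  push_cast
  ring

lemma mlW_re_cpow (α : ℝ) (hα : α ∈ Ioo (0:ℝ) 1) (ξ : ℝ) :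
    Real.cos (Real.pi / 2 * α) * ‖mlW ξ ^ (α:ℂ)‖ ≤ (mlW ξ ^ (α:ℂ)).re := by
  rw [Complex.cpow_ofReal_re, Complex.norm_cpow_real, mul_comm]
  refine mul_le_mul_of_nonneg_left ?_ (by positivity)
  have h1 : |(mlW ξ).arg| ≤ Real.pi / 2 :=
    Complex.abs_arg_le_pi_div_two_iff.2 (by rw [mlW_re]; exact zero_le_one)
  rw [← Real.cos_abs ((mlW ξ).arg * α), abs_mul, abs_of_pos hα.1]
  have hα1 := hα.1
  have hα2 := hα.2
  have hpi := Real.pi_pos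
  refine Real.cos_le_cos_of_nonneg_of_le_pi (by positivity) ?_ (by gcongr)
  nlinarith

lemma ml_kappa_pos (α : ℝ) (hα : α ∈ Ioo (0:ℝ) 1) : 0 < Real.cos (Real.pi / 2 * α) := by
  have hα1 := hα.1
  have hα2 := hα.2
  have hpi := Real.pi_pos
  apply Real.cos_pos_of_mem_Ioo
  constructor <;> nlinarith

lemma mlW_cpow_one_le (α : ℝ) (hα : 0 < α) (ξ : ℝ) : 1 ≤ ‖mlW ξ ^ (α:ℂ)‖ := by
  rw [Complex.norm_cpow_real]
  exact Real.one_le_rpow (mlW_one_le ξ) hα.le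

lemma mlW_den (α : ℝ) (hα : α ∈ Ioo (0:ℝ) 1) (z : ℂ)
    (hz : z.re < Real.cos (Real.pi / 2 * α) / 2) (ξ : ℝ) :
    Real.cos (Real.pi / 2 * α) / 2 * ‖mlW ξ ^ (α:ℂ)‖ ≤ ‖mlW ξ ^ (α:ℂ) - z‖ := by
  have h1 := mlW_re_cpow α hα ξ
  have h2 := mlW_cpow_one_le α hα.1 ξ
  have h3 := ml_kappa_pos α hα
  have h4 := Complex.re_le_norm (mlW ξ ^ (α:ℂ) - z)
  rw [Complex.sub_re] at h4
  nlinarith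

/-- The integrand of the contour representation. -/
noncomputable def mlJ (α β : ℝ) (z : ℂ) (ξ : ℝ) : ℂ :=
  Complex.exp (mlW ξ) * mlW ξ ^ (-(β:ℂ)) * (mlW ξ ^ (α:ℂ) / (mlW ξ ^ (α:ℂ) - z))

lemma mlW_exp_norm (ξ : ℝ) : ‖Complex.exp (mlW ξ)‖ = Real.exp 1 := by
  rw [Complex.norm_exp, mlW_re]

lemma mlW_den_ne (α : ℝ) (hα : α ∈ Ioo (0:ℝ) 1) (z : ℂ)
    (hz : z.re < Real.cos (Real.pi / 2 * α) / 2) (ξ : ℝ) : mlW ξ ^ (α:ℂ) - z ≠ 0 := by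
  have h1 := mlW_den α hα z hz ξ
  have h2 := mlW_cpow_one_le α hα.1 ξ
  have h3 := ml_kappa_pos α hα
  rw [← norm_pos_iff]
  nlinarith

lemma mlW_ratio (α : ℝ) (hα : α ∈ Ioo (0:ℝ) 1) (z : ℂ)
    (hz : z.re < Real.cos (Real.pi / 2 * α) / 2) (ξ : ℝ) :
    ‖mlW ξ ^ (α:ℂ) / (mlW ξ ^ (α:ℂ) - z)‖ ≤ 2 / Real.cos (Real.pi / 2 * α) := by
  have h1 := mlW_den α hα z hz ξ
  have h3 := ml_kappa_pos α hα
  have h4 : 0 < ‖mlW ξ ^ (α:ℂ) - z‖ := norm_pos_iff.2 (mlW_den_ne α hα z hz ξ)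
  rw [norm_div, div_le_div_iff₀ h4 h3]
  linarith

lemma mlW_inv (α : ℝ) (hα : α ∈ Ioo (0:ℝ) 1) (z : ℂ)
    (hz : z.re < Real.cos (Real.pi / 2 * α) / 2) (ξ : ℝ) :
    ‖1 / (mlW ξ ^ (α:ℂ) - z)‖ ≤ 2 / Real.cos (Real.pi / 2 * α) := by
  have h1 := mlW_den α hα z hz ξ
  have h2 := mlW_cpow_one_le α hα.1 ξ
  have h3 := ml_kappa_pos α hα
  have h4 : 0 < ‖mlW ξ ^ (α:ℂ) - z‖ := norm_pos_iff.2 (mlW_den_ne α hα z hz ξ)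
  rw [norm_div, norm_one, div_le_div_iff₀ h4 h3]
  nlinarith

lemma mlJ_cont (α β : ℝ) (hα : α ∈ Ioo (0:ℝ) 1) (z : ℂ)
    (hz : z.re < Real.cos (Real.pi / 2 * α) / 2) : Continuous (mlJ α β z) := by
  unfold mlJ
  exact ((Complex.continuous_exp.comp mlW_cont).mul (mlW_cpow_cont _)).mul
    ((mlW_cpow_cont _).div ((mlW_cpow_cont _).sub continuous_const) (mlW_den_ne α hα z hz))

lemma mlJ_bound (α β : ℝ) (hα : α ∈ Ioo (0:ℝ) 1) (hβ : 2 ≤ β) (z : ℂ)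
    (hz : z.re < Real.cos (Real.pi / 2 * α) / 2) (ξ : ℝ) :
    ‖mlJ α β z ξ‖ ≤ Real.exp 1 * (2 / Real.cos (Real.pi / 2 * α)) * (1 + ξ ^ 2)⁻¹ := by
  unfold mlJ
  have h1 := mlW_cpow_bound β hβ ξ
  have h2 := mlW_ratio α hα z hz ξ
  rw [norm_mul, norm_mul, mlW_exp_norm]
  calc _ ≤ Real.exp 1 * (1 + ξ ^ 2)⁻¹ * (2 / Real.cos (Real.pi / 2 * α)) := by gcongr
    _ = _ := by ring

lemma mlJ_int (α β : ℝ) (hα : α ∈ Ioo (0:ℝ) 1) (hβ : 2 ≤ β) (z : ℂ)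
    (hz : z.re < Real.cos (Real.pi / 2 * α) / 2) : Integrable (mlJ α β z) :=
  Integrable.mono' (integrable_inv_one_add_sq.const_mul _)
    (mlJ_cont α β hα z hz).aestronglyMeasurable (Eventually.of_forall (mlJ_bound α β hα hβ z hz))

lemma mlJ_diff (α β : ℝ) (hα : α ∈ Ioo (0:ℝ) 1) (hβ : 2 ≤ β) (z : ℂ)
    (hz : z.re < Real.cos (Real.pi / 2 * α) / 2) :
    DifferentiableAt ℂ (fun z => ∫ ξ, mlJ α β z ξ) z := by
  set U : Set ℂ := {z : ℂ | z.re < Real.cos (Real.pi / 2 * α) / 2} with hU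
  have hUo : IsOpen U := isOpen_lt Complex.continuous_re continuous_const
  have hUn : U ∈ 𝓝 z := hUo.mem_nhds hz
  have h := hasDerivAt_integral_of_dominated_loc_of_deriv_le (μ := (volume : Measure ℝ))
    (F := fun z ξ => mlJ α β z ξ)
    (F' := fun z ξ => mlJ α β z ξ * (1 / (mlW ξ ^ (α:ℂ) - z)))
    (x₀ := z) (s := U)
    (bound := fun ξ => Real.exp 1 * (2 / Real.cos (Real.pi / 2 * α)) * (2 / Real.cos (Real.pi / 2 * α)) * (1 + ξ ^ 2)⁻¹)
    hUn ?_ (mlJ_int α β hα hβ z hz) ?_ ?_ (integrable_inv_one_add_sq.const_mul _) ?_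
  · exact h.2.differentiableAt
  · filter_upwards [hUn] with z hz
    exact (mlJ_cont α β hα z hz).aestronglyMeasurable
  · refine Continuous.aestronglyMeasurable ?_
    exact (mlJ_cont α β hα z hz).mul
      (continuous_const.div ((mlW_cpow_cont _).sub continuous_const) (mlW_den_ne α hα z hz))
  · refine Eventually.of_forall fun ξ z hz => ?_
    have h1 := mlJ_bound α β hα hβ z hz ξ
    have h2 := mlW_inv α hα z hz ξ
    have h3 := ml_kappa_pos α hα
    rw [norm_mul]
    calc _ ≤ (Real.exp 1 * (2 / Real.cos (Real.pi / 2 * α)) * (1 + ξ ^ 2)⁻¹) * (2 / Real.cos (Real.pi / 2 * α)) := by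
          gcongr
      _ = _ := by ring
  · refine Eventually.of_forall fun ξ z hz => ?_
    have hne := mlW_den_ne α hα z hz ξ
    have h1 : HasDerivAt (fun z : ℂ => mlW ξ ^ (α:ℂ) - z) (-1) z := by
      simpa using (hasDerivAt_id z).const_sub (mlW ξ ^ (α:ℂ))
    have h2 := ((hasDerivAt_const z (mlW ξ ^ (α:ℂ))).fun_div h1 hne).const_mul
      (Complex.exp (mlW ξ) * mlW ξ ^ (-(β:ℂ)))
    refine h2.congr_deriv ?_
    unfold mlJ
    field_simp
    ring

lemma mlC_eq_near (α β : ℝ) (hα : α ∈ Ioo (0:ℝ) 1) (hβ : 2 ≤ β) (z : ℂ) (hz : ‖z‖ < 1) :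
    mlC α β z = ∫ ξ, mlJ α β z ξ := by
  set F : ℕ → ℝ → ℂ := fun n ξ =>
    z ^ n * (Complex.exp (mlW ξ) * mlW ξ ^ (-((β + α * n : ℝ) : ℂ))) with hF
  have hs : ∀ n : ℕ, 2 ≤ β + α * n := fun n => by
    have : 0 ≤ α * n := mul_nonneg hα.1.le (Nat.cast_nonneg n)
    linarith
  have hFb : ∀ n ξ, ‖F n ξ‖ ≤ ‖z‖ ^ n * (Real.exp 1 * (1 + ξ ^ 2)⁻¹) := by
    intro n ξ
    have := mlW_cpow_bound _ (hs n) ξ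
    simp only [hF]
    rw [norm_mul, norm_mul, norm_pow, mlW_exp_norm]
    gcongr
  have hFi : ∀ n, Integrable (F n) := fun n => by
    refine Integrable.mono' ((integrable_inv_one_add_sq.const_mul (Real.exp 1)).const_mul (‖z‖ ^ n)) ?_
      (Eventually.of_forall (hFb n))
    exact (continuous_const.mul ((Complex.continuous_exp.comp mlW_cont).mul
      (mlW_cpow_cont _))).aestronglyMeasurable
  have hsum : Summable fun n => ∫ ξ, ‖F n ξ‖ := by
    refine Summable.of_nonneg_of_le (fun n => integral_nonneg fun ξ => norm_nonneg _) (fun n => ?_)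
      ((summable_geometric_of_lt_one (norm_nonneg z) hz).mul_right (∫ ξ : ℝ, Real.exp 1 * (1 + ξ ^ 2)⁻¹))
    rw [← integral_const_mul]
    exact integral_mono (hFi n).norm ((integrable_inv_one_add_sq.const_mul (Real.exp 1)).const_mul (‖z‖ ^ n))
      (hFb n)
  have key := hasSum_integral_of_summable_integral_norm hFi hsum
  have h1 : ∀ n, ∫ ξ, F n ξ = z ^ n * ((1 / Real.Gamma (β + α * n) : ℝ) : ℂ) := by
    intro n
    simp only [hF]
    rw [integral_const_mul, ml_invGamma _ (hs n)]
  have h2 : ∀ ξ, ∑' n, F n ξ = mlJ α β z ξ := by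
    intro ξ
    have hw := mlW_ne ξ
    have hwa : mlW ξ ^ (α:ℂ) ≠ 0 := by
      rw [← norm_pos_iff]; linarith [mlW_cpow_one_le α hα.1 ξ]
    have h3 : ∀ n, F n ξ = (Complex.exp (mlW ξ) * mlW ξ ^ (-(β:ℂ))) * (z / mlW ξ ^ (α:ℂ)) ^ n := by
      intro n
      simp only [hF]
      have h4 : (-((β + α * n : ℝ) : ℂ)) = -(β:ℂ) + -((n:ℂ) * (α:ℂ)) := by push_cast; ring
      rw [h4, Complex.cpow_add _ _ hw, Complex.cpow_neg _ ((n:ℂ) * (α:ℂ)), Complex.cpow_nat_mul, div_pow]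
      ring
    simp_rw [h3]
    have h5 : ‖z / mlW ξ ^ (α:ℂ)‖ < 1 := by
      have := mlW_cpow_one_le α hα.1 ξ
      rw [norm_div, div_lt_one (by linarith)]
      linarith
    rw [tsum_mul_left, tsum_geometric_of_norm_lt_one h5]
    unfold mlJ
    congr 1
    have h6 : mlW ξ ^ (α:ℂ) - z ≠ 0 := by
      intro h
      rw [sub_eq_zero] at h
      rw [← h, div_self hwa] at h5
      simp at h5
    have h7 : 1 - z / mlW ξ ^ (α:ℂ) = (mlW ξ ^ (α:ℂ) - z) / mlW ξ ^ (α:ℂ) := by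
      field_simp
    rw [h7, inv_div]
  simp_rw [h1, h2] at key
  exact key.tsum_eq

lemma mlC_bounded (α β : ℝ) (hα : α ∈ Ioo (0:ℝ) 1) (hβ : 2 ≤ β) :
    ∃ C : ℝ, ∀ z : ℂ, z.re ≤ 0 → ‖mlC α β z‖ ≤ C := by
  set U : Set ℂ := {z : ℂ | z.re < Real.cos (Real.pi / 2 * α) / 2} with hU
  have hk := ml_kappa_pos α hα
  have hUo : IsOpen U := isOpen_lt Complex.continuous_re continuous_const
  have hUc : IsPreconnected U := (convex_halfSpace_re_lt _).isPreconnected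
  have h1 : AnalyticOnNhd ℂ (mlC α β) U :=
    DifferentiableOn.analyticOnNhd (mlC_diff α β hα.1).differentiableOn hUo
  have h2 : AnalyticOnNhd ℂ (fun z => ∫ ξ, mlJ α β z ξ) U :=
    DifferentiableOn.analyticOnNhd
      (fun z hz => (mlJ_diff α β hα hβ z hz).differentiableWithinAt) hUo
  have heq := h1.eqOn_of_preconnected_of_eventuallyEq h2 hUc (z₀ := 0) (by simp [hU]; linarith) (by
    filter_upwards [Metric.ball_mem_nhds (0:ℂ) one_pos] with z hz
    exact mlC_eq_near α β hα hβ z (mem_ball_zero_iff.1 hz))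
  refine ⟨∫ ξ : ℝ, Real.exp 1 * (2 / Real.cos (Real.pi / 2 * α)) * (1 + ξ ^ 2)⁻¹, fun z hz => ?_⟩
  have hzU : z.re < Real.cos (Real.pi / 2 * α) / 2 := by linarith
  rw [heq hzU]
  exact norm_integral_le_of_norm_le (integrable_inv_one_add_sq.const_mul _)
    (Eventually.of_forall (mlJ_bound α β hα hβ z hzU))

/-- Boundedness in some sector around the negative real axis. -/
def mlP (f : ℂ → ℂ) : Prop :=
  ∃ k : ℝ, 0 < k ∧ ∃ C : ℝ, ∀ z : ℂ, |z.im| ≤ k * (-z.re) → ‖f z‖ ≤ C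

lemma mlP_deriv (f : ℂ → ℂ) (hf : Differentiable ℂ f) (h : mlP f) : mlP (fun z => z * deriv f z) := by
  obtain ⟨k, hk, C, hC⟩ := h
  have hC0 : 0 ≤ C := (norm_nonneg _).trans (hC 0 (by simp))
  set ρ : ℝ := k / (2 * (1 + k)) with hρ
  have hρ0 : 0 < ρ := by positivity
  have hρk : ρ * (1 + k) = k / 2 := by rw [hρ]; field_simp
  refine ⟨k / 2, by positivity, (1 + k / 2) * (C / ρ), fun z hz => ?_⟩
  have hx : 0 ≤ -z.re := by
    by_contra hneg
    push Not at hneg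
    have := abs_nonneg z.im
    nlinarith
  rcases hx.eq_or_lt with h0 | hpos
  · have him : z.im = 0 := by
      rw [← h0, mul_zero] at hz
      exact abs_nonpos_iff.1 hz
    have : z = 0 := Complex.ext (by simp; linarith) (by simpa using him)
    rw [this]; simp; positivity
  · have hd : ‖deriv f z‖ ≤ C / (ρ * (-z.re)) := by
      refine Complex.norm_deriv_le_of_forall_mem_sphere_norm_le (by positivity) hf.diffContOnCl ?_
      intro w hw
      apply hC
      have hw' : ‖w - z‖ = ρ * (-z.re) := by simpa [dist_eq_norm] using hw
      have h1 := Complex.abs_re_le_norm (w - z)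
      have h2 := Complex.abs_im_le_norm (w - z)
      rw [hw', Complex.sub_re, abs_le] at h1
      rw [hw', Complex.sub_im, abs_le] at h2
      rw [abs_le] at hz ⊢
      constructor <;> nlinarith
    have hzn : ‖z‖ ≤ (1 + k / 2) * (-z.re) := by
      have := Complex.norm_le_abs_re_add_abs_im z
      rw [abs_of_neg (by linarith)] at this
      linarith
    rw [norm_mul]
    calc ‖z‖ * ‖deriv f z‖ ≤ ((1 + k / 2) * (-z.re)) * (C / (ρ * (-z.re))) := by gcongr
      _ = _ := by
        generalize -z.re = x at hpos
        field_simp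

lemma mlP_pred (α β : ℝ) (hα : 0 < α) (h : mlP (mlC α β)) : mlP (mlC α (β - 1)) := by
  obtain ⟨k₁, hk₁, C₁, h₁⟩ := h
  obtain ⟨k₂, hk₂, C₂, h₂⟩ := mlP_deriv _ (mlC_diff α β hα) ⟨k₁, hk₁, C₁, h₁⟩
  refine ⟨min k₁ k₂, lt_min hk₁ hk₂, α * C₂ + |β - 1| * C₁, fun z hz => ?_⟩
  have hx : 0 ≤ -z.re := by
    by_contra hneg
    push Not at hneg
    have := abs_nonneg z.im
    have := lt_min hk₁ hk₂
    nlinarith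
  have e : mlC α (β - 1) z = α * (z * deriv (mlC α β) z) + (β - 1) * mlC α β z := by
    rw [mlC_deriv α β hα z]; ring
  have b1 := h₁ z (hz.trans (by gcongr; exact min_le_left _ _))
  have b2 := h₂ z (hz.trans (by gcongr; exact min_le_right _ _))
  rw [e]
  refine (norm_add_le _ _).trans ?_
  have e2 : ((β:ℂ) - 1) = ((β - 1 : ℝ) : ℂ) := by push_cast; rfl
  rw [norm_mul, norm_mul ((β:ℂ) - 1), e2, Complex.norm_real, Complex.norm_real, Real.norm_eq_abs, Real.norm_eq_abs,
    abs_of_pos hα]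
  gcongr

lemma mlP_all (α β : ℝ) (hα : α ∈ Ioo (0:ℝ) 1) : mlP (mlC α β) := by
  have key : ∀ n : ℕ, ∀ β : ℝ, 2 ≤ β + n → mlP (mlC α β) := by
    intro n
    induction n with
    | zero =>
      intro β hβ
      obtain ⟨C, hC⟩ := mlC_bounded α β hα (by simpa using hβ)
      refine ⟨1, one_pos, C, fun z hz => hC z ?_⟩
      have := abs_nonneg z.im
      linarith
    | succ n ih =>
      intro β hβ
      have := mlP_pred α (β + 1) hα.1 (ih (β + 1) (by push_cast at hβ; linarith))
      simpa using this
  obtain ⟨n, hn⟩ := exists_nat_ge (2 - β)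
  exact key n β (by linarith)

lemma ml_bounded (α β : ℝ) (hα : α ∈ Ioo (0:ℝ) 1) :
    ∃ C : ℝ, ∀ x : ℝ, x ≤ 0 → |mittagLeffler α β x| ≤ C := by
  obtain ⟨k, hk, C, hC⟩ := mlP_all α β hα
  refine ⟨C, fun x hx => ?_⟩
  have h := hC x (by
    simp only [Complex.ofReal_im, Complex.ofReal_re, abs_zero]
    exact mul_nonneg hk.le (by linarith))
  rwa [← mlC_real, Complex.norm_real] at h

lemma ml_shift (α β : ℝ) (hα : 0 < α) (x : ℝ) :
    mittagLeffler α β x = 1 / Real.Gamma β + x * mittagLeffler α (β + α) x := by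
  have h := mlC_shift α β hα x
  rw [← mlC_real, ← mlC_real] at h
  exact_mod_cast h

lemma ml_hasDeriv (α β : ℝ) (hα : 0 < α) (x : ℝ) (hx : x ≠ 0) :
    HasDerivAt (mittagLeffler α β)
      ((mittagLeffler α (β - 1) x - (β - 1) * mittagLeffler α β x) / (α * x)) x := by
  have h1 := ((mlC_diff α β hα) (x:ℂ)).hasDerivAt
  have h2 : deriv (mlC α β) (x:ℂ) =
      (((mittagLeffler α (β - 1) x - (β - 1) * mittagLeffler α β x) / (α * x) : ℝ) : ℂ) := by
    have h3 := mlC_deriv α β hα x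
    rw [← mlC_real, ← mlC_real] at h3
    push_cast
    rw [← h3]
    have : (α:ℂ) ≠ 0 := by exact_mod_cast hα.ne'
    have : (x:ℂ) ≠ 0 := by exact_mod_cast hx
    field_simp
  rw [h2] at h1
  have h4 := h1.real_of_complex
  rw [Complex.ofReal_re] at h4
  refine h4.congr_of_eventuallyEq (Eventually.of_forall fun y => ?_)
  simp only [← mlC_real, Complex.ofReal_re]

lemma ml_down (α β : ℝ) (hα : 0 < α) (x : ℝ) (hx : x ≠ 0) :
    mittagLeffler α β x = x⁻¹ * (mittagLeffler α (β - α) x - 1 / Real.Gamma (β - α)) := by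
  have h := ml_shift α (β - α) hα x
  rw [sub_add_cancel] at h
  rw [h]
  field_simp
  ring

lemma ml_tendsto (α β : ℝ) (hα : α ∈ Ioo (0:ℝ) 1) :
    Tendsto (mittagLeffler α β) atBot (𝓝 0) := by
  obtain ⟨C, hC⟩ := ml_bounded α (β - α) hα
  have h0 : Tendsto (fun x : ℝ => |x⁻¹| * (C + |1 / Real.Gamma (β - α)|)) atBot (𝓝 0) := by
    have := (tendsto_inv_atBot_zero (𝕜 := ℝ)).abs.mul_const (C + |1 / Real.Gamma (β - α)|)
    simpa using this
  refine squeeze_zero_norm' ?_ h0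
  filter_upwards [eventually_lt_atBot (0:ℝ)] with x hx
  rw [ml_down α β hα.1 x hx.ne, Real.norm_eq_abs, abs_mul]
  have := hC x hx.le
  gcongr
  exact (abs_sub _ _).trans (by gcongr)

lemma ml_expand (α β : ℝ) (hα : 0 < α) (x : ℝ) (hx : x ≠ 0) :
    mittagLeffler α β x = x⁻¹ * (-(1 / Real.Gamma (β - α) + x⁻¹ * (1 / Real.Gamma (β - 2 * α)) +
      x⁻¹ ^ 2 * (1 / Real.Gamma (β - 3 * α))) + x⁻¹ ^ 2 * mittagLeffler α (β - 3 * α) x) := by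
  have h1 := ml_down α β hα x hx
  have h2 := ml_down α (β - α) hα x hx
  have h3 := ml_down α (β - 2 * α) hα x hx
  rw [show β - α - α = β - 2 * α by ring] at h2
  rw [show β - 2 * α - α = β - 3 * α by ring] at h3
  rw [h1, h2, h3]
  ring

end helpers

/-- As `z → -∞`, `z⁶(2E_α'(z)² − E_α(z)E_α''(z))` tends to
`2(1/Γ(1-2α)² − 1/(Γ(1-α)Γ(1-3α)))` (reciprocals of `Γ` at poles read as `0`). -/
theorem mittagLeffler_asymptotic (α : ℝ) (hα : α ∈ Set.Ioo (0 : ℝ) 1) :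
    Filter.Tendsto
      (fun z : ℝ => z ^ 6 *
        (2 * (deriv (mittagLeffler α 1) z) ^ 2 -
          mittagLeffler α 1 z * deriv (deriv (mittagLeffler α 1)) z))
      Filter.atBot
      (nhds (2 * (1 / Real.Gamma (1 - 2 * α) ^ 2 -
        1 / (Real.Gamma (1 - α) * Real.Gamma (1 - 3 * α))))) := by
  have hα0 : 0 < α := hα.1
  have hαne : α ≠ 0 := hα0.ne'
  -- derivatives
  have hd1 : ∀ z : ℝ, z ≠ 0 → deriv (mittagLeffler α 1) z = mittagLeffler α 0 z / (α * z) := by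
    intro z hz
    have := (ml_hasDeriv α 1 hα0 z hz).deriv
    rw [this]; simp
  have hd2 : ∀ z : ℝ, z ≠ 0 → deriv (deriv (mittagLeffler α 1)) z =
      (mittagLeffler α (-1) z + (1 - α) * mittagLeffler α 0 z) / (α ^ 2 * z ^ 2) := by
    intro z hz
    have he : deriv (mittagLeffler α 1) =ᶠ[nhds z] fun z => mittagLeffler α 0 z / (α * z) := by
      filter_upwards [isOpen_ne.mem_nhds hz] with y hy
      exact hd1 y hy
    rw [he.deriv_eq]
    have h1 := ml_hasDeriv α 0 hα0 z hz
    have h2 : HasDerivAt (fun z : ℝ => α * z) α z := by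
      simpa using (hasDerivAt_id z).const_mul α
    rw [(h1.fun_div h2 (mul_ne_zero hαne hz)).deriv]
    rw [zero_sub]
    field_simp
    ring
  -- coefficients
  set a : ℝ := 1 / Real.Gamma (1 - α) with ha
  set b : ℝ := 1 / Real.Gamma (1 - 2 * α) with hb
  set c : ℝ := 1 / Real.Gamma (1 - 3 * α) with hc
  have g0 : ∀ t : ℝ, 1 / Real.Gamma (0 - t) = -t * (1 / Real.Gamma (1 - t)) := by
    intro t
    have := ml_Gamma_rec (1 - t)
    rw [show 1 - t - 1 = 0 - t by ring] at this
    rw [← this]; ring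
  have gm : ∀ t : ℝ, 1 / Real.Gamma (-1 - t) = t * (1 + t) * (1 / Real.Gamma (1 - t)) := by
    intro t
    have := ml_Gamma_rec (0 - t)
    rw [show 0 - t - 1 = -1 - t by ring, g0] at this
    rw [← this]; ring
  have E1 := fun z hz => ml_expand α 1 hα0 z hz
  have E0 := fun z hz => ml_expand α 0 hα0 z hz
  have Em := fun z hz => ml_expand α (-1) hα0 z hz
  simp only [g0, ← ha, ← hb, ← hc] at E0
  simp only [gm, ← ha, ← hb, ← hc] at Em
  simp only [← ha, ← hb, ← hc] at E1
  have T1 := ml_tendsto α (1 - 3 * α) hα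
  have T0 := ml_tendsto α (0 - 3 * α) hα
  have Tm := ml_tendsto α (-1 - 3 * α) hα
  have Tu : Filter.Tendsto (fun z : ℝ => z⁻¹) Filter.atBot (nhds 0) := tendsto_inv_atBot_zero
  set e1 := mittagLeffler α (1 - 3 * α) with he1
  set e0 := mittagLeffler α (0 - 3 * α) with he0
  set em := mittagLeffler α (-1 - 3 * α) with hem
  let Q : ℝ × ℝ × ℝ × ℝ → ℝ := fun p =>
    (α ^ 2 * (2 * b ^ 2 - 2 * a * c + 6 * p.1 * b * c + 6 * p.1 ^ 2 * c ^ 2)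
      + 4 * (α * (a + 2 * p.1 * b + 3 * p.1 ^ 2 * c)) * p.2.2.1 + 2 * p.1 ^ 2 * p.2.2.1 ^ 2
      + (a + p.1 * b + p.1 ^ 2 * c) * (p.2.2.2 + (1 - α) * p.2.2.1)
      + p.2.1 * (α ^ 2 * (2 * a + 6 * p.1 * b + 12 * p.1 ^ 2 * c))
      - p.1 ^ 2 * p.2.1 * (p.2.2.2 + (1 - α) * p.2.2.1)) / α ^ 2
  have hQc : Continuous Q := by fun_prop
  have hlim : Filter.Tendsto (fun z : ℝ => Q (z⁻¹, e1 z, e0 z, em z)) Filter.atBot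
      (nhds (Q (0, 0, 0, 0))) :=
    (hQc.tendsto _).comp (Tu.prodMk_nhds (T1.prodMk_nhds (T0.prodMk_nhds Tm)))
  have hval : Q (0, 0, 0, 0) = 2 * (1 / Real.Gamma (1 - 2 * α) ^ 2 -
        1 / (Real.Gamma (1 - α) * Real.Gamma (1 - 3 * α))) := by
    have h1 : 1 / Real.Gamma (1 - 2 * α) ^ 2 = b ^ 2 := by rw [hb, div_pow, one_pow]
    have h2 : 1 / (Real.Gamma (1 - α) * Real.Gamma (1 - 3 * α)) = a * c := by
      rw [ha, hc, one_div_mul_one_div]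
    rw [h1, h2]
    simp only [Q]
    field_simp
    ring
  rw [← hval]
  refine hlim.congr' ?_
  filter_upwards [Filter.eventually_lt_atBot (0:ℝ)] with z hz
  have hz0 : z ≠ 0 := hz.ne
  rw [hd1 z hz0, hd2 z hz0, E1 z hz0, E0 z hz0, Em z hz0]
  obtain ⟨u, hu, hzu⟩ : ∃ u : ℝ, u ≠ 0 ∧ z = u⁻¹ := ⟨z⁻¹, inv_ne_zero hz0, (inv_inv z).symm⟩
  simp only [Q]
  generalize e1 z = x1
  generalize e0 z = x0
  generalize em z = xm
  subst hzu
  rw [inv_inv]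
  field_simp
  ring
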